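/- For every real p ∈ [2,∞), the function f₂(s) = 1 + 3π_p/4 + ∫_{−1}^s (( −z)^{p²−p}(1−(−z)^p)^{1−p} + 1)^{1/p} dz − 2^{1/p}((1−(−s)^p)^{1/p} + s) has no critical point on (−1, 0): for every s ∈ (−1,0), (1 + (−s)^{p(p−1)}(1−(−s)^p)^{1−p})^{1/p} < 2^{1/p}((−s)^{p−1}(1−(−s)^p)^{(1−p)/p} + 1). In particular, for every w ≥ 0 one has 2(1+w)^p > w^p + 1, so the equation w^p + 1 = 2(1+w)^p has no nonnegative root. -/

import Mathlib

open Real MeasureTheory intervalIntegral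

/-- The ℓ_p norm of a point of ℝ². -/
noncomputable def lpN (p : ℝ) (z : ℝ × ℝ) : ℝ := (|z.1| ^ p + |z.2| ^ p) ^ (1 / p)

/-- The normalization factor `N_p(φ) = (|sin φ|^p + |cos φ|^p)^{1/p}`. -/
noncomputable def Np (p φ : ℝ) : ℝ := (|Real.sin φ| ^ p + |Real.cos φ| ^ p) ^ (1 / p)

/-- The parameterization `ρ_p(φ) = (cos φ, sin φ)/N_p(φ)` of the ℓ_p unit circle. -/
noncomputable def rho (p φ : ℝ) : ℝ × ℝ := (Real.cos φ / Np p φ, Real.sin φ / Np p φ)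

/-- The ℓ_p speed `‖ρ_p′(t)‖_p` of the parameterization `ρ_p`. -/
noncomputable def speed (p t : ℝ) : ℝ := lpN p (deriv (rho p) t)

/-- `π_p`, half the ℓ_p-circumference of the ℓ_p unit circle. -/
noncomputable def piP (p : ℝ) : ℝ := 2 * ∫ t in (0 : ℝ)..(Real.pi / 2), speed p t

/-- The slope variable: `w(z) = u^{p-1}(1-u^p)^{(1-p)/p}` with `u = -z`. -/
theorem aux_w (p : ℝ) (hp : 2 ≤ p) (z : ℝ) (hz : z ∈ Set.Ioo (-1 : ℝ) 0) :
    0 < 1 - (-z) ^ p ∧ 0 ≤ (-z) ^ (p - 1) * (1 - (-z) ^ p) ^ ((1 - p) / p) ∧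
    (-z) ^ (p * (p - 1)) * (1 - (-z) ^ p) ^ (1 - p)
      = ((-z) ^ (p - 1) * (1 - (-z) ^ p) ^ ((1 - p) / p)) ^ p := by
  have h0 : 0 < -z := by linarith [hz.2]
  have h1 : -z < 1 := by linarith [hz.1]
  have hx : 0 < 1 - (-z) ^ p := by
    have := Real.rpow_lt_one h0.le h1 (by linarith : 0 < p)
    linarith
  refine ⟨hx, by positivity, ?_⟩
  rw [Real.mul_rpow (by positivity) (by positivity), ← Real.rpow_mul h0.le,
    ← Real.rpow_mul hx.le]
  have hp0 : p ≠ 0 := by linarith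
  congr 2
  · ring
  · field_simp

theorem aux_pow (p : ℝ) (hp : 2 ≤ p) (w : ℝ) (hw : 0 ≤ w) : w ^ p + 1 ≤ (1 + w) ^ p := by
  have := Real.add_rpow_le_rpow_add hw zero_le_one (by linarith : (1 : ℝ) ≤ p)
  rw [Real.one_rpow, add_comm w 1] at this
  exact this

theorem aux_root (p : ℝ) (hp : 2 ≤ p) (w : ℝ) (hw : 0 ≤ w) : (w ^ p + 1) ^ (1 / p) ≤ w + 1 := by
  calc (w ^ p + 1) ^ (1 / p) ≤ ((1 + w) ^ p) ^ (1 / p) :=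
        Real.rpow_le_rpow (by positivity) (aux_pow p hp w hw) (by positivity)
    _ = w + 1 := by
        rw [← Real.rpow_mul (by positivity), mul_one_div_cancel (by linarith), Real.rpow_one,
          add_comm]

theorem aux_ineq (p : ℝ) (hp : 2 ≤ p) (s : ℝ) (hs : s ∈ Set.Ioo (-1 : ℝ) 0) :
    (1 + (-s) ^ (p * (p - 1)) * (1 - (-s) ^ p) ^ (1 - p)) ^ (1 / p)
        < (2 : ℝ) ^ (1 / p) * ((-s) ^ (p - 1) * (1 - (-s) ^ p) ^ ((1 - p) / p) + 1) := by
  obtain ⟨_, hw, he⟩ := aux_w p hp s hs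
  rw [he, add_comm (1 : ℝ)]
  refine (aux_root p hp _ hw).trans_lt ?_
  have h2 : (1 : ℝ) < 2 ^ (1 / p) := Real.one_lt_rpow (by norm_num) (by positivity)
  nlinarith

theorem aux_deriv (p : ℝ) (hp : 2 ≤ p) (s : ℝ) (hs : s ∈ Set.Ioo (-1 : ℝ) 0) :
    HasDerivAt (fun s : ℝ => (1 - (-s) ^ p) ^ (1 / p) + s)
      ((-s) ^ (p - 1) * (1 - (-s) ^ p) ^ ((1 - p) / p) + 1) s := by
  obtain ⟨hx, _, _⟩ := aux_w p hp s hs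
  have h0 : 0 < -s := by linarith [hs.2]
  have hp0 : p ≠ 0 := by linarith
  have h1 := ((hasDerivAt_id s).neg.rpow_const (p := p) (Or.inl h0.ne')).const_sub 1
  have h2 := (h1.rpow_const (p := 1 / p) (Or.inl hx.ne')).add (hasDerivAt_id s)
  refine HasDerivAt.congr_deriv h2 ?_
  have : (1 - p) / p = 1 / p - 1 := by field_simp
  rw [this]
  simp
  field_simp
  exact Or.inl trivial

theorem aux_int (p : ℝ) (hp : 2 ≤ p) (s : ℝ) (hs : s ∈ Set.Ioo (-1 : ℝ) 0) :
    IntervalIntegrable (fun z : ℝ =>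
      ((-z) ^ (p ^ 2 - p) * (1 - (-z) ^ p) ^ (1 - p) + 1) ^ (1 / p)) volume (-1) s := by
  have hsub : ∀ z ∈ Set.Ioc (-1 : ℝ) s, z ∈ Set.Ioo (-1 : ℝ) 0 :=
    fun z hz => ⟨hz.1, hz.2.trans_lt hs.2⟩
  have hI : IntegrableOn
      (fun z : ℝ => (-z) ^ (p - 1) * (1 - (-z) ^ p) ^ ((1 - p) / p) + 1) (Set.Ioc (-1) s) := by
    refine integrableOn_deriv_of_nonneg (g := fun s : ℝ => (1 - (-s) ^ p) ^ (1 / p) + s) ?_ ?_ ?_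
    · have : Continuous (fun s : ℝ => (1 - (-s) ^ p) ^ (1 / p) + s) := by
        refine Continuous.add (Continuous.rpow_const (continuous_const.sub
          (continuous_neg.rpow_const ?_)) ?_) continuous_id
        · intro x; right; linarith
        · intro x; right; positivity
      exact this.continuousOn
    · intro z hz
      exact aux_deriv p hp z (hsub z ⟨hz.1, hz.2.le⟩)
    · intro z hz
      have := (aux_w p hp z (hsub z ⟨hz.1, hz.2.le⟩)).2.1
      linarith
  rw [intervalIntegrable_iff_integrableOn_Ioc_of_le hs.1.le]
  refine Integrable.mono' hI (Measurable.aestronglyMeasurable (by fun_prop)) ?_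
  refine (ae_restrict_iff' measurableSet_Ioc).2 (Filter.Eventually.of_forall fun z hz => ?_)
  obtain ⟨hx, hw, he⟩ := aux_w p hp z (hsub z hz)
  rw [show p ^ 2 - p = p * (p - 1) by ring, he, Real.norm_of_nonneg (by positivity)]
  exact aux_root p hp _ hw

/-- For `p ∈ [2,∞)`, the function `f₂` has no critical point on `(−1,0)`:
for every `s ∈ (−1,0)` the derivative inequality
`(1 + (−s)^{p(p−1)}(1−(−s)^p)^{1−p})^{1/p} < 2^{1/p}((−s)^{p−1}(1−(−s)^p)^{(1−p)/p} + 1)`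
holds. In particular `2(1+w)^p > w^p + 1` for every `w ≥ 0`. -/
theorem stmt_10 (p : ℝ) (hp : 2 ≤ p) :
    let f₂ : ℝ → ℝ := fun s =>
      1 + 3 * piP p / 4
        + (∫ z in (-1 : ℝ)..s,
            ((-z) ^ (p ^ 2 - p) * (1 - (-z) ^ p) ^ (1 - p) + 1) ^ (1 / p))
        - (2 : ℝ) ^ (1 / p) * ((1 - (-s) ^ p) ^ (1 / p) + s)
    (∀ s ∈ Set.Ioo (-1 : ℝ) 0, deriv f₂ s ≠ 0) ∧
    (∀ s ∈ Set.Ioo (-1 : ℝ) 0,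
      (1 + (-s) ^ (p * (p - 1)) * (1 - (-s) ^ p) ^ (1 - p)) ^ (1 / p)
        < (2 : ℝ) ^ (1 / p) * ((-s) ^ (p - 1) * (1 - (-s) ^ p) ^ ((1 - p) / p) + 1)) ∧
    (∀ w : ℝ, 0 ≤ w → w ^ p + 1 < 2 * (1 + w) ^ p) := by
  intro f₂
  refine ⟨fun s hs => ?_, aux_ineq p hp, fun w hw => ?_⟩
  · obtain ⟨hx, hw, he⟩ := aux_w p hp s hs
    have h0 : 0 < -s := by linarith [hs.2]
    have hc : ContinuousAt (fun z : ℝ =>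
        ((-z) ^ (p ^ 2 - p) * (1 - (-z) ^ p) ^ (1 - p) + 1) ^ (1 / p)) s := by
      refine ContinuousAt.rpow_const (ContinuousAt.add (ContinuousAt.mul
        (continuousAt_neg.rpow_const (Or.inl h0.ne')) (ContinuousAt.rpow_const
        (continuousAt_const.sub (continuousAt_neg.rpow_const (Or.inl h0.ne')))
        (Or.inl hx.ne'))) continuousAt_const) (Or.inr (by positivity))
    have hm : Measurable (fun z : ℝ =>
        ((-z) ^ (p ^ 2 - p) * (1 - (-z) ^ p) ^ (1 - p) + 1) ^ (1 / p)) := by fun_prop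
    have hF := integral_hasDerivAt_right (aux_int p hp s hs)
      (hm.stronglyMeasurable.stronglyMeasurableAtFilter) hc
    have hD := (hF.const_add (1 + 3 * piP p / 4)).sub
      ((aux_deriv p hp s hs).const_mul ((2 : ℝ) ^ (1 / p)))
    have hD' : deriv f₂ s = _ := hD.deriv
    rw [hD']
    have := aux_ineq p hp s hs
    rw [show p ^ 2 - p = p * (p - 1) by ring, add_comm _ (1 : ℝ)]
    exact (sub_neg.2 this).ne
  · have h1 := aux_pow p hp w hw
    have h2 : 0 < (1 + w) ^ p := by positivity
    linarith
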